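/- arXiv:2402.11225 — 2 statements merged into one kernel-verified Lean document; each statement's English description precedes it below -/
import Mathlib

section
/- Let f : ℝ² → ℝ be of class C² satisfying (i) D²f(p)(q,q) > 0 for all p, q ∈ ℝ² with q ≠ 0, and (ii) there is a constant Λ > 0 with |D²f(p)| ≤ Λ/(1+|p|) for all p ∈ ℝ². Let ρ : [1,∞) → (0,∞) be of class C¹ with ρ'(t) > 0 and (d/dt)[ρ(t)/√t] ≤ 0 for all t ≥ 1. Let u ∈ C²(ℝ²) be an entire solution of div[Df(∇u)] = 0 such that sup_{R>0} R^{−2} ∫_{B_R} Γ₁^{−1} · ρ²(Γ₁)/ρ'(Γ₁) dx < ∞, where Γ₁ := 1 + |∂₁u|² and B_R is the disc of radius R centered at the origin. Then u is an affine function. -/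
open Real MeasureTheory Metric
open scoped ENNReal

noncomputable section

/-- `ℝ²` with its Euclidean structure. -/
abbrev E2 : Type := EuclideanSpace ℝ (Fin 2)

/-- The `i`-th standard basis vector of `ℝ²`. -/
def ee (i : Fin 2) : E2 := EuclideanSpace.single i 1

/-- The Hessian bilinear form `D²f(p)(q,q)`. -/
def Hess (f : E2 → ℝ) (p q : E2) : ℝ := iteratedFDeriv ℝ 2 f p ![q, q]

/-- The partial derivative `∂ᵢu(x)`. -/
def pd (u : E2 → ℝ) (i : Fin 2) (x : E2) : ℝ := fderiv ℝ u x (ee i)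

/-- The equation `div [Df(∇u)] = 0`, i.e. `∑ i, ∂ᵢ[(∂f/∂pᵢ)(∇u(x))] = 0` on `ℝ²`. -/
def solves (f u : E2 → ℝ) : Prop :=
  ∀ x : E2, ∑ i : Fin 2, fderiv ℝ (fun y => fderiv ℝ f (gradient u y) (ee i)) x (ee i) = 0

/-- Differentiation of `t ↦ ∫ v (x + t e) g x` at `0` for `v` of class `C¹` and `g` continuous
with compact support. -/
lemma hasDerivAt_integral_translate_mul {v g : E2 → ℝ} (hv : ContDiff ℝ 1 v)
    (hg : Continuous g) (hgc : HasCompactSupport g) (e : E2) :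
    HasDerivAt (fun t : ℝ => ∫ x, v (x + t • e) * g x) (∫ x, fderiv ℝ v x e * g x) 0 := by
  have hv' : Continuous (fderiv ℝ v) := hv.continuous_fderiv one_ne_zero
  have hcomp : IsCompact ((fun z : E2 × ℝ => z.1 + z.2 • e) ''
      (tsupport g ×ˢ closedBall (0 : ℝ) 1)) :=
    (IsCompact.prod hgc (isCompact_closedBall _ _)).image (by fun_prop)
  obtain ⟨C, hC⟩ := hcomp.exists_bound_of_continuousOn
    (f := fun y => fderiv ℝ v y e) (by fun_prop)
  have key := hasDerivAt_integral_of_dominated_loc_of_deriv_le (μ := (volume : Measure E2))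
    (F := fun t x => v (x + t • e) * g x) (F' := fun t x => fderiv ℝ v (x + t • e) e * g x)
    (bound := fun x => C * ‖g x‖) (x₀ := (0 : ℝ)) (s := ball 0 1)
    (ball_mem_nhds _ one_pos) ?_ ?_ ?_ ?_ ?_ ?_
  · simpa using key.2
  · have := hv.continuous
    exact .of_forall fun t => Continuous.aestronglyMeasurable (by fun_prop)
  · have := hv.continuous
    exact Continuous.integrable_of_hasCompactSupport (by fun_prop) hgc.mul_left
  · exact Continuous.aestronglyMeasurable (by fun_prop)
  · refine .of_forall fun x t ht => ?_
    rw [norm_mul]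
    by_cases hx : x ∈ tsupport g
    · gcongr
      exact hC _ ⟨(x, t), ⟨hx, ball_subset_closedBall ht⟩, rfl⟩
    · simp [image_eq_zero_of_notMem_tsupport hx]
  · exact Continuous.integrable_of_hasCompactSupport (by fun_prop) (hgc.norm.mul_left)
  · refine .of_forall fun x t _ => ?_
    have h1 : HasFDerivAt v (fderiv ℝ v (x + t • e)) (x + t • e) :=
      ((hv.differentiable one_ne_zero) _).hasFDerivAt
    have h2 : HasDerivAt (fun t : ℝ => x + t • e) e t := by
      simpa using ((hasDerivAt_id t).smul_const e).const_add x
    exact (h1.comp_hasDerivAt t h2).mul_const (g x)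

/-- A directional derivative of a divergence-free `C¹` field is weakly divergence free. -/
lemma integral_sum_fderiv_mul_eq_zero {v : Fin 2 → E2 → ℝ} (hv : ∀ i, ContDiff ℝ 1 (v i))
    (hdiv : ∀ x, ∑ i, fderiv ℝ (v i) x (ee i) = 0) {ψ : E2 → ℝ} (hψ : ContDiff ℝ 1 ψ)
    (hψc : HasCompactSupport ψ) (e : E2) :
    ∫ x, ∑ i, fderiv ℝ (v i) x e * fderiv ℝ ψ x (ee i) = 0 := by
  have hψ' : Continuous (fderiv ℝ ψ) := hψ.continuous_fderiv one_ne_zero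
  have hv' : ∀ i, Continuous (fderiv ℝ (v i)) := fun i => (hv i).continuous_fderiv one_ne_zero
  have hc : ∀ i, HasCompactSupport fun x => fderiv ℝ ψ x (ee i) := fun i =>
    hψc.fderiv_apply ℝ (ee i)
  have hψ0 := hψ.continuous
  have hv0 := fun i => (hv i).continuous
  have hzero : ∀ t : ℝ, ∑ i, ∫ x, v i (x + t • e) * fderiv ℝ ψ x (ee i) = 0 := by
    intro t
    have hd : ∀ i x, fderiv ℝ (fun y => v i (y + t • e)) x = fderiv ℝ (v i) (x + t • e) :=
      fun i x => fderiv_comp_add_right _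
    have hi : ∀ i, Integrable fun x => fderiv ℝ (v i) (x + t • e) (ee i) * ψ x := fun i =>
      Continuous.integrable_of_hasCompactSupport (by have := hv' i; fun_prop) hψc.mul_left
    have hp : ∀ i, ∫ x, v i (x + t • e) * fderiv ℝ ψ x (ee i)
        = - ∫ x, fderiv ℝ (v i) (x + t • e) (ee i) * ψ x := by
      intro i
      have := integral_mul_fderiv_eq_neg_fderiv_mul_of_integrable (μ := (volume : Measure E2))
        (f := fun x => v i (x + t • e)) (g := ψ) (v := ee i)
        (by simpa only [hd] using hi i)
        (Continuous.integrable_of_hasCompactSupport (by have := hv0 i; fun_prop) (hc i).mul_left)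
        (Continuous.integrable_of_hasCompactSupport (by have := hv0 i; fun_prop) hψc.mul_left)
        (fun x _ => by
          have := (hv i).differentiable one_ne_zero
          fun_prop)
        (fun x _ => hψ.differentiable one_ne_zero x)
      simpa only [hd] using this
    simp_rw [hp]
    rw [Finset.sum_neg_distrib, ← integral_finsetSum _ fun i _ => hi i]
    simp [← Finset.sum_mul, hdiv]
  have hder : HasDerivAt (fun t : ℝ => ∑ i, ∫ x, v i (x + t • e) * fderiv ℝ ψ x (ee i))
      (∑ i, ∫ x, fderiv ℝ (v i) x e * fderiv ℝ ψ x (ee i)) 0 :=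
    HasDerivAt.fun_sum fun i _ =>
      hasDerivAt_integral_translate_mul (hv i) (by fun_prop) (hc i) e
  have hvψ : ∀ i, Integrable fun x => fderiv ℝ (v i) x e * fderiv ℝ ψ x (ee i) := fun i =>
    Continuous.integrable_of_hasCompactSupport (by have := hv' i; fun_prop) (hc i).mul_left
  rw [integral_finsetSum _ fun i _ => hvψ i]
  simp_rw [hzero] at hder
  exact hder.unique (hasDerivAt_const _ _)

/-- Cutoff functions between concentric balls of radii `R` and `2 R`. -/
lemma exists_cutoff : ∃ C : ℝ, ∀ R : ℝ, 0 < R → ∃ η : E2 → ℝ, ContDiff ℝ 1 η ∧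
    HasCompactSupport η ∧ (∀ x, 0 ≤ η x) ∧ (∀ x, η x ≤ 1) ∧ (∀ x ∈ ball 0 R, η x = 1) ∧
    (∀ x ∉ ball 0 (2 * R), η x = 0) ∧ (∀ x ∈ ball 0 R, gradient η x = 0) ∧
    (∀ x ∉ ball 0 (2 * R), gradient η x = 0) ∧ ∀ x, ‖gradient η x‖ ≤ C / R := by
  let φ : ContDiffBump (0 : E2) := ⟨1, 3 / 2, by norm_num, by norm_num⟩
  have hφ : ContDiff ℝ 1 φ := φ.contDiff
  have hφ' : Continuous (fderiv ℝ φ) := hφ.continuous_fderiv one_ne_zero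
  obtain ⟨C, hC⟩ := (φ.hasCompactSupport.fderiv ℝ).exists_bound_of_continuous hφ'
  refine ⟨C, fun R hR => ?_⟩
  have hRi : R⁻¹ ≠ 0 := (inv_pos.2 hR).ne'
  have hd : ∀ x, fderiv ℝ (fun x => φ (R⁻¹ • x)) x = R⁻¹ • fderiv ℝ φ (R⁻¹ • x) :=
    fun x => fderiv_comp_smul _
  have hg : ∀ x, ‖gradient (fun x => φ (R⁻¹ • x)) x‖ = R⁻¹ * ‖fderiv ℝ φ (R⁻¹ • x)‖ := by
    intro x
    rw [gradient, LinearIsometryEquiv.norm_map, hd, norm_smul, norm_inv, Real.norm_of_nonneg hR.le]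
  refine ⟨fun x => φ (R⁻¹ • x), by fun_prop, φ.hasCompactSupport.comp_smul hRi,
    fun _ => φ.nonneg, fun _ => φ.le_one, fun x hx => φ.one_of_mem_closedBall ?_,
    fun x hx => φ.zero_of_le_dist ?_, fun x hx => ?_, fun x hx => ?_, fun x => ?_⟩
  · rw [mem_ball_zero_iff] at hx
    rw [mem_closedBall_zero_iff, norm_smul, norm_inv, Real.norm_of_nonneg hR.le]
    change R⁻¹ * ‖x‖ ≤ 1
    rw [inv_mul_le_iff₀ hR]; linarith
  · rw [mem_ball_zero_iff, not_lt] at hx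
    rw [dist_zero_right, norm_smul, norm_inv, Real.norm_of_nonneg hR.le]
    change (3 / 2 : ℝ) ≤ R⁻¹ * ‖x‖
    rw [le_inv_mul_iff₀ hR]; linarith
  · rw [← norm_eq_zero, hg]
    have : R⁻¹ • x ∈ ball (0 : E2) φ.rIn := by
      rw [mem_ball_zero_iff] at hx ⊢
      rw [norm_smul, norm_inv, Real.norm_of_nonneg hR.le]
      change R⁻¹ * ‖x‖ < 1
      rw [inv_mul_lt_iff₀ hR]; linarith
    rw [(φ.eventuallyEq_one_of_mem_ball this).fderiv_eq]
    simp [Pi.one_def]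
  · rw [← norm_eq_zero, hg]
    have : R⁻¹ • x ∉ tsupport φ := by
      rw [φ.tsupport_eq, mem_closedBall_zero_iff, not_le, norm_smul, norm_inv,
        Real.norm_of_nonneg hR.le]
      rw [mem_ball_zero_iff, not_lt] at hx
      change (3 / 2 : ℝ) < R⁻¹ * ‖x‖
      rw [lt_inv_mul_iff₀ hR]; linarith
    rw [fderiv_of_notMem_tsupport ℝ this]
    simp
  · rw [hg, div_eq_inv_mul]
    gcongr
    exact hC _

/-- Young's inequality for a positive semidefinite symmetric bilinear form. -/
lemma neg_two_mul_bilin_le {B : E2 →L[ℝ] E2 →L[ℝ] ℝ} (hsymm : ∀ p q, B p q = B q p)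
    (hpos : ∀ p, 0 ≤ B p p) (p q : E2) (a b : ℝ) {d t : ℝ} (hd : 0 < d) (ht : 0 < t) :
    -(2 * a * b * B p q) ≤ t * (a ^ 2 * (d * B p p)) + b ^ 2 / d * B q q / t := by
  have h := hpos ((t * a * d) • p + b • q)
  simp only [map_add, map_smul, add_apply, smul_apply,
    smul_eq_mul, hsymm q p] at h
  have hid : t * (a ^ 2 * (d * B p p)) + b ^ 2 / d * B q q / t + 2 * a * b * B p q
      = (t * a * d * (t * a * d * B p p + b * B p q) + b * (t * a * d * B p q + b * B q q))
        / (t * d) := by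
    field_simp
    ring
  have h2 := div_nonneg (by linarith : 0 ≤ t * a * d * (t * a * d * B p p + b * B p q)
    + b * (t * a * d * B p q + b * B q q)) (mul_pos ht hd).le
  linarith

lemma continuous_gradient {w : E2 → ℝ} (hw : ContDiff ℝ 1 w) : Continuous (gradient w) :=
  (InnerProductSpace.toDual ℝ E2).symm.continuous.comp (hw.continuous_fderiv one_ne_zero)

/-- A monotone, bounded sequence of nonnegative numbers satisfying
`b n ≤ t (b (n + 1) - b n) + K / t` for all `t > 0` vanishes. -/
lemma eq_zero_of_le_mul_sub_add_div {b : ℕ → ℝ} (hb : Monotone b) (hb0 : ∀ n, 0 ≤ b n) {K K' : ℝ}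
    (hbK : ∀ n, b n ≤ K) (hrec : ∀ n, ∀ t > 0, b n ≤ t * (b (n + 1) - b n) + K' / t) (n : ℕ) :
    b n = 0 := by
  have hbdd : BddAbove (Set.range b) := ⟨K, by rintro _ ⟨n, rfl⟩; exact hbK n⟩
  have hL := tendsto_atTop_ciSup hb hbdd
  set L := ⨆ n, b n
  have hLt : ∀ t > 0, L ≤ K' / t := fun t ht => by
    have h := ((((Filter.tendsto_add_atTop_iff_nat 1).2 hL).sub hL).const_mul t).add_const (K' / t)
    simpa using le_of_tendsto_of_tendsto' hL h fun n => hrec n t ht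
  have hL0 : L ≤ 0 := by
    have h : Filter.Tendsto (fun t : ℝ => K' / t) Filter.atTop (nhds 0) :=
      tendsto_const_nhds.div_atTop Filter.tendsto_id
    exact ge_of_tendsto h ((Filter.eventually_gt_atTop 0).mono hLt)
  exact le_antisymm ((le_ciSup hbdd n).trans hL0) (hb0 n)

/-- A Liouville property: if `w` is a weak solution of `div (A ∇w) = 0` and the energy density
`Φ(w)² / Φ'(w) A` has quadratically growing integrals over balls, then the energy of `w` vanishes. -/
lemma energy_eq_zero_of_weak_solution {A : E2 → E2 →L[ℝ] E2 →L[ℝ] ℝ} (hA : Continuous A)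
    (hsymm : ∀ x p q, A x p q = A x q p) (hpos : ∀ x p, 0 ≤ A x p p)
    {w : E2 → ℝ} (hw : ContDiff ℝ 1 w) {Φ : ℝ → ℝ} (hΦ : ContDiff ℝ 1 Φ)
    (hΦ' : ∀ s, 0 < deriv Φ s)
    (hweak : ∀ ψ : E2 → ℝ, ContDiff ℝ 1 ψ → HasCompactSupport ψ →
      ∫ x, A x (gradient w x) (gradient ψ x) = 0)
    {g : E2 → ℝ} (hg : Continuous g) (hg0 : ∀ x, 0 ≤ g x)
    (hgA : ∀ x q, Φ (w x) ^ 2 / deriv Φ (w x) * A x q q ≤ g x * ‖q‖ ^ 2)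
    {K : ℝ} (hK : ∀ R, 0 < R → ∫ x in ball (0 : E2) R, g x ≤ K * R ^ 2) (x : E2) :
    A x (gradient w x) (gradient w x) = 0 := by
  have hw0 := hw.continuous
  have hwg := continuous_gradient hw
  have hΦ0 := hΦ.continuous
  have hΦ1 : Continuous (deriv Φ) := hΦ.continuous_deriv le_rfl
  set G : E2 → ℝ := fun x => deriv Φ (w x) * A x (gradient w x) (gradient w x) with hG
  have hGc : Continuous G := by fun_prop
  have hG0 : ∀ x, 0 ≤ G x := fun x => mul_nonneg (hΦ' _).le (hpos _ _)
  have hball : ∀ {F : E2 → ℝ}, Continuous F → ∀ R, IntegrableOn F (ball 0 R) := fun hF R =>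
    (hF.continuousOn.integrableOn_compact (isCompact_closedBall 0 R)).mono_set
      ball_subset_closedBall
  set I : ℝ → ℝ := fun R => ∫ x in ball (0 : E2) R, G x
  obtain ⟨C, hcut⟩ := exists_cutoff
  have hest : ∀ R, 0 < R → I R ≤ 16 * (C ^ 2 * K) ∧
      ∀ t > 0, I R ≤ t * (I (2 * R) - I R) + 4 * (C ^ 2 * K) / t := by
    intro R hR
    obtain ⟨η, hη, hηc, hη0, hη1, hηin, hηout, hgin, hgout, hgb⟩ := hcut R hR
    have hηcont := hη.continuous
    have hηg := continuous_gradient hη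
    set S : E2 → ℝ := fun x => 2 * η x * Φ (w x) * A x (gradient w x) (gradient η x) with hS
    have hSc : Continuous S := by fun_prop
    have hSsupp : HasCompactSupport S := by
      have : S = fun x => η x * (2 * Φ (w x) * A x (gradient w x) (gradient η x)) := by
        funext x; simp only [hS]; ring
      rw [this]
      exact hηc.mul_right
    have hSi : Integrable S := hSc.integrable_of_hasCompactSupport hSsupp
    have hEi : Integrable fun x => η x ^ 2 * G x := by
      refine Continuous.integrable_of_hasCompactSupport (by fun_prop) ?_
      simp_rw [pow_two, mul_assoc]
      exact hηc.mul_right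
    have hψ : ContDiff ℝ 1 fun x => η x ^ 2 * Φ (w x) := by fun_prop
    have hψc : HasCompactSupport fun x => η x ^ 2 * Φ (w x) := by
      simp_rw [pow_two, mul_assoc]
      exact hηc.mul_right
    have hψg : ∀ x, gradient (fun x => η x ^ 2 * Φ (w x)) x
        = (2 * η x * Φ (w x)) • gradient η x + (η x ^ 2 * deriv Φ (w x)) • gradient w x := by
      intro x
      have h1 := (hη.differentiable one_ne_zero x).hasFDerivAt
      have h2 := (hw.differentiable one_ne_zero x).hasFDerivAt
      have h3 := (hΦ.differentiable one_ne_zero (w x)).hasDerivAt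
      have h4 := (h1.pow 2).mul (h3.comp_hasFDerivAt x h2)
      have h5 : fderiv ℝ (fun x => η x ^ 2 * Φ (w x)) x = (2 * η x * Φ (w x)) • fderiv ℝ η x
          + (η x ^ 2 * deriv Φ (w x)) • fderiv ℝ w x := by
        refine HasFDerivAt.fderiv (h4.congr_fderiv ?_)
        ext v
        simp
        ring
      simp only [gradient, h5, map_add, map_smulₛₗ]
      simp
    have hident : ∫ x, η x ^ 2 * G x = ∫ x, -S x := by
      have h := hweak _ hψ hψc
      have h' : ∀ x, A x (gradient w x) (gradient (fun x => η x ^ 2 * Φ (w x)) x)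
          = S x + η x ^ 2 * G x := by
        intro x
        rw [hψg]
        simp only [map_add, map_smul, smul_eq_mul, hS, hG]
        ring
      simp_rw [h'] at h
      rw [integral_add hSi hEi] at h
      rw [integral_neg]
      linarith
    have hyoung : ∀ t > 0, ∀ x, -S x ≤ t * (η x ^ 2 * G x) + g x * ‖gradient η x‖ ^ 2 / t := by
      intro t ht x
      refine (neg_two_mul_bilin_le (hsymm x) (hpos x) _ _ _ _ (hΦ' (w x)) ht).trans ?_
      exact add_le_add le_rfl (div_le_div_of_nonneg_right (hgA x _) ht.le)
    have hgi : Integrable fun x => g x * ‖gradient η x‖ ^ 2 := by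
      refine Continuous.integrable_of_hasCompactSupport (by fun_prop) ?_
      refine HasCompactSupport.intro (isCompact_closedBall (0 : E2) (2 * R)) fun x hx => ?_
      simp [hgout x fun h => hx (ball_subset_closedBall h)]
    have hgint : ∫ x, g x * ‖gradient η x‖ ^ 2 ≤ 4 * (C ^ 2 * K) := by
      rw [← setIntegral_eq_integral_of_forall_compl_eq_zero (s := ball (0 : E2) (2 * R))
        fun x hx => by simp [hgout x hx]]
      calc ∫ x in ball (0 : E2) (2 * R), g x * ‖gradient η x‖ ^ 2
          ≤ ∫ x in ball (0 : E2) (2 * R), g x * (C / R) ^ 2 := by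
            refine setIntegral_mono hgi.integrableOn (hball (by fun_prop) _) fun x => ?_
            have := hg0 x
            have := hgb x
            dsimp only
            gcongr
        _ = (∫ x in ball (0 : E2) (2 * R), g x) * (C / R) ^ 2 := integral_mul_const _ _
        _ ≤ K * (2 * R) ^ 2 * (C / R) ^ 2 := by
            gcongr
            exact hK _ (by positivity)
        _ = 4 * (C ^ 2 * K) := by
            field_simp
            ring
    have hIR : I R ≤ ∫ x, η x ^ 2 * G x := by
      have : I R = ∫ x in ball (0 : E2) R, η x ^ 2 * G x :=
        setIntegral_congr_fun measurableSet_ball fun x hx => by simp [hηin x hx]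
      rw [this]
      exact setIntegral_le_integral hEi
        (.of_forall fun x => mul_nonneg (sq_nonneg _) (hG0 x))
    refine ⟨?_, fun t ht => ?_⟩
    · have h : ∫ x, -S x ≤ ∫ x, (1 / 2 * (η x ^ 2 * G x) + g x * ‖gradient η x‖ ^ 2 / (1 / 2)) :=
        integral_mono hSi.neg ((hEi.const_mul _).add (hgi.div_const _))
          (hyoung (1 / 2) (by norm_num))
      rw [integral_add (hEi.const_mul _) (hgi.div_const _), integral_const_mul,
        integral_div, ← hident] at h
      linarith
    · have hsub : ball (0 : E2) R ⊆ ball 0 (2 * R) := ball_subset_ball (by linarith)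
      set D : Set E2 := ball 0 (2 * R) \ ball 0 R
      have hDm : MeasurableSet D := measurableSet_ball.diff measurableSet_ball
      have hDG : ∫ x in D, G x = I (2 * R) - I R :=
        setIntegral_sdiff measurableSet_ball (hball hGc _) hsub
      have hDi : IntegrableOn G D := (hball hGc _).mono_set Set.sdiff_subset
      have hDS : ∫ x in D, -S x = ∫ x, -S x := by
        refine setIntegral_eq_integral_of_forall_compl_eq_zero fun x hx => ?_
        by_cases h : x ∈ ball (0 : E2) R
        · simp [hS, hgin x h]
        · simp [hS, hηout x fun h' => hx ⟨h', h⟩]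
      have h : ∫ x in D, -S x ≤ ∫ x in D, (t * G x + g x * ‖gradient η x‖ ^ 2 / t) := by
        refine setIntegral_mono hSi.neg.integrableOn
          ((hDi.const_mul _).add (hgi.integrableOn.div_const _)) fun x => ?_
        refine (hyoung t ht x).trans ?_
        have h1 : η x ^ 2 * G x ≤ G x :=
          mul_le_of_le_one_left (hG0 x) (pow_le_one₀ (hη0 x) (hη1 x))
        gcongr
      rw [integral_add (hDi.const_mul _) (hgi.integrableOn.div_const _), integral_const_mul,
        integral_div, hDG, hDS, ← hident] at h
      have h2 : ∫ x in D, g x * ‖gradient η x‖ ^ 2 ≤ 4 * (C ^ 2 * K) :=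
        (setIntegral_le_integral hgi
          (.of_forall fun x => mul_nonneg (hg0 x) (sq_nonneg _))).trans hgint
      have h3 := div_le_div_of_nonneg_right h2 ht.le
      linarith
  have hIz : ∀ n : ℕ, I (2 ^ n) = 0 := by
    refine eq_zero_of_le_mul_sub_add_div (b := fun n : ℕ => I (2 ^ n))
      (K' := 4 * (C ^ 2 * K)) (fun m n hmn => ?_)
      (fun n => integral_nonneg hG0) (fun n => (hest _ (by positivity)).1) (fun n t ht => ?_)
    · exact setIntegral_mono_set (hball hGc _) (.of_forall hG0)
        (ball_subset_ball (pow_le_pow_right₀ one_le_two hmn)).eventuallyLE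
    · have := (hest (2 ^ n) (by positivity)).2 t ht
      rwa [← pow_succ'] at this
  obtain ⟨n, hn⟩ := pow_unbounded_of_one_lt ‖x‖ one_lt_two
  have hae := (setIntegral_eq_zero_iff_of_nonneg_ae (.of_forall hG0) (hball hGc _)).1 (hIz n)
  have hGx : G x = 0 := Measure.eqOn_open_of_ae_eq hae isOpen_ball hGc.continuousOn
    continuousOn_const (mem_ball_zero_iff.2 hn)
  exact (mul_eq_zero.1 hGx).resolve_left (hΦ' _).ne'

lemma gradient_apply (u : E2 → ℝ) (x : E2) (i : Fin 2) :
    gradient u x i = fderiv ℝ u x (ee i) := by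
  rw [← toDual_gradient, InnerProductSpace.toDual_apply_apply, ee,
    EuclideanSpace.inner_single_right]
  simp

lemma eq_sum_smul_ee (x : E2) : x = ∑ i, x i • ee i := by
  ext j
  fin_cases j <;> simp [ee]

lemma contDiff_gradient {u : E2 → ℝ} (hu : ContDiff ℝ 2 u) : ContDiff ℝ 1 (gradient u) := by
  have h : ContDiff ℝ 1 (fderiv ℝ u) := hu.fderiv_right (by norm_num)
  refine contDiff_euclidean.2 fun i => ?_
  simp_rw [gradient_apply]
  fun_prop

lemma fderiv_gradient_apply {u : E2 → ℝ} (hu : ContDiff ℝ 2 u) (x e : E2) (j : Fin 2) :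
    fderiv ℝ (gradient u) x e j = fderiv ℝ (fderiv ℝ u) x e (ee j) := by
  have h1 : HasFDerivAt (gradient u) (fderiv ℝ (gradient u) x) x :=
    ((contDiff_gradient hu).differentiable one_ne_zero x).hasFDerivAt
  have h : ContDiff ℝ 1 (fderiv ℝ u) := hu.fderiv_right (by norm_num)
  have h2 : HasFDerivAt (fderiv ℝ u) (fderiv ℝ (fderiv ℝ u) x) x :=
    (h.differentiable one_ne_zero x).hasFDerivAt
  have h3 := (EuclideanSpace.proj j : E2 →L[ℝ] ℝ).hasFDerivAt.comp x h1
  have h4 := (ContinuousLinearMap.apply ℝ ℝ (ee j)).hasFDerivAt.comp x h2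
  have h5 : (EuclideanSpace.proj j : E2 →L[ℝ] ℝ) ∘ gradient u
      = (ContinuousLinearMap.apply ℝ ℝ (ee j)) ∘ fderiv ℝ u := by
    funext y
    simp [gradient_apply]
  rw [h5] at h3
  simpa using DFunLike.congr_fun (h3.unique h4) e

lemma fderiv_fderiv_symm {f : E2 → ℝ} (hf : ContDiff ℝ 2 f) (x p q : E2) :
    fderiv ℝ (fderiv ℝ f) x p q = fderiv ℝ (fderiv ℝ f) x q p :=
  (hf.contDiffAt.isSymmSndFDerivAt (by simp)).eq p q

lemma contDiff_pd {u : E2 → ℝ} (hu : ContDiff ℝ 2 u) (i : Fin 2) : ContDiff ℝ 1 (pd u i) := by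
  have h : ContDiff ℝ 1 (fderiv ℝ u) := hu.fderiv_right (by norm_num)
  unfold pd
  fun_prop

lemma gradient_pd {u : E2 → ℝ} (hu : ContDiff ℝ 2 u) (x : E2) (i : Fin 2) :
    gradient (pd u i) x = fderiv ℝ (gradient u) x (ee i) := by
  have h : ContDiff ℝ 1 (fderiv ℝ u) := hu.fderiv_right (by norm_num)
  ext j
  rw [fderiv_gradient_apply hu, gradient_apply, fderiv_fderiv_symm hu]
  unfold pd
  rw [fderiv_clm_apply (h.differentiable one_ne_zero x) (by fun_prop)]
  simp

lemma fderiv_fderiv_comp_gradient {f u : E2 → ℝ} (hf : ContDiff ℝ 2 f) (hu : ContDiff ℝ 2 u)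
    (i j : Fin 2) (x : E2) :
    fderiv ℝ (fun y => fderiv ℝ f (gradient u y) (ee i)) x (ee j)
      = fderiv ℝ (fderiv ℝ f) (gradient u x) (gradient (pd u j) x) (ee i) := by
  have h : ContDiff ℝ 1 (fderiv ℝ f) := hf.fderiv_right (by norm_num)
  have h1 : HasFDerivAt (gradient u) (fderiv ℝ (gradient u) x) x :=
    ((contDiff_gradient hu).differentiable one_ne_zero x).hasFDerivAt
  have h2 := (h.differentiable one_ne_zero (gradient u x)).hasFDerivAt.comp x h1
  have h3 := (ContinuousLinearMap.apply ℝ ℝ (ee i)).hasFDerivAt.comp x h2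
  rw [gradient_pd hu]
  simpa using! DFunLike.congr_fun h3.fderiv (ee j)

/-- The nonlinear function of `∂₁u` used for testing the equation. -/
def testFun (ρ : ℝ → ℝ) (s : ℝ) : ℝ := s * ρ (1 + s ^ 2) / √(1 + s ^ 2)

lemma two_mul_derivWithin_le {ρ : ℝ → ℝ} (hρ : ContDiffOn ℝ 1 ρ (Set.Ici 1)) {t : ℝ} (ht : 1 ≤ t)
    (hmono : derivWithin (fun s => ρ s / √s) (Set.Ici 1) t ≤ 0) :
    2 * t * derivWithin ρ (Set.Ici 1) t ≤ ρ t := by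
  have h0 : 0 < t := by linarith
  have h1 := (hρ.differentiableOn one_ne_zero t ht).hasDerivWithinAt
  have h2 := (Real.hasDerivAt_sqrt h0.ne').hasDerivWithinAt (s := Set.Ici 1)
  have h3 := (h1.fun_div h2 (Real.sqrt_pos.2 h0).ne').derivWithin (uniqueDiffOn_Ici 1 t ht)
  rw [h3, Real.sq_sqrt h0.le, div_le_iff₀ h0, zero_mul] at hmono
  have h4 := Real.sq_sqrt h0.le
  have h5 : 0 < √t := Real.sqrt_pos.2 h0
  have h6 : ρ t * (1 / (2 * √t)) * (2 * √t) = ρ t := by field_simp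
  calc 2 * t * derivWithin ρ (Set.Ici 1) t
      = derivWithin ρ (Set.Ici 1) t * √t * (2 * √t) := by
        linear_combination (-2 * derivWithin ρ (Set.Ici 1) t) * h4
    _ ≤ ρ t * (1 / (2 * √t)) * (2 * √t) :=
        mul_le_mul_of_nonneg_right (by linarith) (by positivity)
    _ = ρ t := h6

lemma hasDerivAt_testFun {ρ : ℝ → ℝ} (hρ : ContDiffOn ℝ 1 ρ (Set.Ici 1)) (s : ℝ) :
    HasDerivAt (testFun ρ) ((ρ (1 + s ^ 2) + 2 * s ^ 2 * (1 + s ^ 2) *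
      derivWithin ρ (Set.Ici 1) (1 + s ^ 2)) / ((1 + s ^ 2) * √(1 + s ^ 2))) s := by
  have h0 : 0 < 1 + s ^ 2 := by positivity
  have h1 : (1 + s ^ 2) ∈ Set.Ici (1 : ℝ) := by simp [sq_nonneg]
  have hΓ : HasDerivAt (fun s : ℝ => 1 + s ^ 2) (2 * s) s := by
    simpa using (hasDerivAt_pow 2 s).const_add 1
  have hr : HasDerivAt (fun s => ρ (1 + s ^ 2))
      (derivWithin ρ (Set.Ici 1) (1 + s ^ 2) * (2 * s)) s := by
    rw [← hasDerivWithinAt_univ]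
    exact (hρ.differentiableOn one_ne_zero _ h1).hasDerivWithinAt.comp s
      hΓ.hasDerivWithinAt fun y _ => by simp [sq_nonneg]
  have h5 : 0 < √(1 + s ^ 2) := Real.sqrt_pos.2 h0
  have h6 := ((hasDerivAt_id s).fun_mul hr).fun_div (hΓ.sqrt h0.ne') h5.ne'
  refine h6.congr_deriv ?_
  simp only [id]
  generalize derivWithin ρ (Set.Ici 1) (1 + s ^ 2) = d
  generalize ρ (1 + s ^ 2) = r
  have h4 := Real.sq_sqrt h0.le
  rw [h4]
  field_simp
  rw [h4]
  ring

lemma continuous_comp_one_add_sq {ρ : ℝ → ℝ} (hρ : ContDiffOn ℝ 1 ρ (Set.Ici 1)) :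
    Continuous fun s : ℝ => ρ (1 + s ^ 2) :=
  hρ.continuousOn.comp_continuous (by fun_prop) fun s => by simp [sq_nonneg]

lemma continuous_derivWithin_comp_one_add_sq {ρ : ℝ → ℝ}
    (hρ : ContDiffOn ℝ 1 ρ (Set.Ici 1)) :
    Continuous fun s : ℝ => derivWithin ρ (Set.Ici 1) (1 + s ^ 2) :=
  (hρ.continuousOn_derivWithin (uniqueDiffOn_Ici 1) le_rfl).comp_continuous (by fun_prop)
    fun s => by simp [sq_nonneg]

lemma contDiff_testFun {ρ : ℝ → ℝ} (hρ : ContDiffOn ℝ 1 ρ (Set.Ici 1)) :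
    ContDiff ℝ 1 (testFun ρ) := by
  refine contDiff_one_iff_deriv.2 ⟨fun s => (hasDerivAt_testFun hρ s).differentiableAt, ?_⟩
  rw [show deriv (testFun ρ) = _ from funext fun s => (hasDerivAt_testFun hρ s).deriv]
  have h1 := continuous_comp_one_add_sq hρ
  have h2 := continuous_derivWithin_comp_one_add_sq hρ
  exact Continuous.div (h1.add (Continuous.mul (by fun_prop) h2)) (by fun_prop)
    fun s => by positivity

lemma two_mul_sqrt_mul_le_deriv_testFun {ρ : ℝ → ℝ} (hρ : ContDiffOn ℝ 1 ρ (Set.Ici 1))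
    (hmono : ∀ t : ℝ, 1 ≤ t → derivWithin (fun s => ρ s / √s) (Set.Ici 1) t ≤ 0)
    (s : ℝ) :
    2 * √(1 + s ^ 2) * derivWithin ρ (Set.Ici 1) (1 + s ^ 2) ≤ deriv (testFun ρ) s := by
  have h0 : 0 < 1 + s ^ 2 := by positivity
  have h1 : 1 ≤ 1 + s ^ 2 := by simp [sq_nonneg]
  have h2 := two_mul_derivWithin_le hρ h1 (hmono _ h1)
  have h4 := Real.mul_self_sqrt h0.le
  rw [(hasDerivAt_testFun hρ s).deriv, le_div_iff₀ (by positivity)]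
  calc _ = 2 * (1 + s ^ 2) * derivWithin ρ (Set.Ici 1) (1 + s ^ 2) *
        (√(1 + s ^ 2) * √(1 + s ^ 2)) := by ring
    _ = 2 * (1 + s ^ 2) * derivWithin ρ (Set.Ici 1) (1 + s ^ 2) +
        2 * s ^ 2 * (1 + s ^ 2) * derivWithin ρ (Set.Ici 1) (1 + s ^ 2) := by rw [h4]; ring
    _ ≤ _ := by linarith

lemma testFun_sq_div_deriv_le {ρ : ℝ → ℝ} (hρ : ContDiffOn ℝ 1 ρ (Set.Ici 1))
    (hmono : ∀ t : ℝ, 1 ≤ t → derivWithin (fun s => ρ s / √s) (Set.Ici 1) t ≤ 0)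
    (hρ' : ∀ t : ℝ, 1 ≤ t → 0 < derivWithin ρ (Set.Ici 1) t) (s : ℝ) :
    testFun ρ s ^ 2 / deriv (testFun ρ) s ≤
      ρ (1 + s ^ 2) ^ 2 / (√(1 + s ^ 2) * derivWithin ρ (Set.Ici 1) (1 + s ^ 2)) := by
  have h0 : 0 < 1 + s ^ 2 := by positivity
  have hd := hρ' (1 + s ^ 2) (by simp [sq_nonneg])
  have hle := two_mul_sqrt_mul_le_deriv_testFun hρ hmono s
  have hp : 0 < √(1 + s ^ 2) * derivWithin ρ (Set.Ici 1) (1 + s ^ 2) := by positivity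
  have hsq : testFun ρ s ^ 2 ≤ ρ (1 + s ^ 2) ^ 2 := by
    rw [testFun, div_pow, Real.sq_sqrt h0.le, div_le_iff₀ h0]
    nlinarith [sq_nonneg (ρ (1 + s ^ 2))]
  gcongr
  linarith

lemma setIntegral_ball_le_of_lintegral {g : E2 → ℝ} (hg : Continuous g) (hg0 : ∀ x, 0 ≤ g x)
    {M : ℝ≥0∞} (hM : M < ⊤) {R : ℝ} (hR : 0 < R)
    (h : ENNReal.ofReal (R ^ (-(2 : ℝ))) * ∫⁻ x in ball (0 : E2) R, ENNReal.ofReal (g x) ≤ M) :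
    ∫ x in ball (0 : E2) R, g x ≤ M.toReal * R ^ 2 := by
  rw [integral_eq_lintegral_of_nonneg_ae (.of_forall hg0) hg.aestronglyMeasurable]
  have h1 := ENNReal.toReal_mono hM.ne h
  rw [ENNReal.toReal_mul, ENNReal.toReal_ofReal (by positivity), Real.rpow_neg hR.le,
    inv_mul_le_iff₀ (by positivity)] at h1
  rw [mul_comm]
  exact_mod_cast h1

theorem statement17 (f u : E2 → ℝ)
    (hf : ContDiff ℝ 2 f)
    (hpos : ∀ p q : E2, q ≠ 0 → 0 < Hess f p q)
    (Lam : ℝ) (hLam : 0 < Lam)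
    (hgrow : ∀ p : E2, ‖iteratedFDeriv ℝ 2 f p‖ ≤ Lam / (1 + ‖p‖))
    (ρ : ℝ → ℝ) (hρC1 : ContDiffOn ℝ 1 ρ (Set.Ici 1))
    (hρpos : ∀ t : ℝ, 1 ≤ t → 0 < ρ t)
    (hρ' : ∀ t : ℝ, 1 ≤ t → 0 < derivWithin ρ (Set.Ici 1) t)
    (hρmono : ∀ t : ℝ, 1 ≤ t → derivWithin (fun s => ρ s / Real.sqrt s) (Set.Ici 1) t ≤ 0)
    (hu : ContDiff ℝ 2 u) (heq : solves f u)
    (hcond : ∃ M : ℝ≥0∞, M < ⊤ ∧ ∀ R : ℝ, 0 < R →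
      ENNReal.ofReal (R ^ (-(2:ℝ))) *
        ∫⁻ x in ball (0 : E2) R, ENNReal.ofReal
          ((1 + (pd u 0 x) ^ 2)⁻¹ * (ρ (1 + (pd u 0 x) ^ 2)) ^ 2 /
            derivWithin ρ (Set.Ici 1) (1 + (pd u 0 x) ^ 2)) ≤ M) :
    ∃ a b c : ℝ, ∀ x : E2, u x = a * x 0 + b * x 1 + c := by
  have hf1 : ContDiff ℝ 1 (fderiv ℝ f) := hf.fderiv_right (by norm_num)
  have hu1 : ContDiff ℝ 1 (fderiv ℝ u) := hu.fderiv_right (by norm_num)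
  have hf2 : Continuous (fderiv ℝ (fderiv ℝ f)) := hf1.continuous_fderiv one_ne_zero
  have hgu := contDiff_gradient hu
  have hgu0 := hgu.continuous
  have hw := contDiff_pd hu 0
  have hw0 := hw.continuous
  have hHess : ∀ p q, Hess f p q = fderiv ℝ (fderiv ℝ f) p q q := fun p q => by
    simp [Hess, iteratedFDeriv_two_apply]
  have hform : ∀ p q, 0 ≤ fderiv ℝ (fderiv ℝ f) p q q := fun p q => by
    rcases eq_or_ne q 0 with rfl | hq
    · simp
    · exact (hHess p q ▸ hpos p q hq).le
  have hdiv : ∀ x, ∑ i, fderiv ℝ (fun y => fderiv ℝ f (gradient u y) (ee i)) x (ee i) = 0 := heq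
  obtain ⟨M, hM, hcond⟩ := hcond
  have hΓ : ∀ x, 1 ≤ 1 + pd u 0 x ^ 2 := fun x => by simp [sq_nonneg]
  set g₀ : E2 → ℝ := fun x => (1 + (pd u 0 x) ^ 2)⁻¹ * (ρ (1 + (pd u 0 x) ^ 2)) ^ 2 /
    derivWithin ρ (Set.Ici 1) (1 + (pd u 0 x) ^ 2) with hg₀
  have hg₀0 : ∀ x, 0 ≤ g₀ x := fun x => by
    have := hρ' _ (hΓ x)
    positivity
  have hg₀c : Continuous g₀ := by
    have h1 := (continuous_comp_one_add_sq hρC1).comp hw0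
    have h2 := (continuous_derivWithin_comp_one_add_sq hρC1).comp hw0
    refine Continuous.div (Continuous.mul (Continuous.inv₀ (by fun_prop) fun x => ?_) (h1.pow 2))
      h2 fun x => (hρ' _ (hΓ x)).ne'
    positivity
  have henergy := energy_eq_zero_of_weak_solution
    (A := fun x => fderiv ℝ (fderiv ℝ f) (gradient u x)) (w := pd u 0) (Φ := testFun ρ)
    (g := fun x => Lam * g₀ x) (K := Lam * M.toReal) (by fun_prop)
    (fun x p q => fderiv_fderiv_symm hf _ p q) (fun x p => hform _ p) hw (contDiff_testFun hρC1)
    (fun s => lt_of_lt_of_le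
      (by have := hρ' (1 + s ^ 2) (by simp [sq_nonneg]); positivity)
      (two_mul_sqrt_mul_le_deriv_testFun hρC1 hρmono s))
    ?_ (by fun_prop) (fun x => mul_nonneg hLam.le (hg₀0 x)) ?_ ?_
  · have hgw : ∀ x, gradient (pd u 0) x = 0 := fun x => by
      by_contra h
      have := hpos (gradient u x) _ h
      rw [hHess, henergy x] at this
      exact this.false
    have hgw' : ∀ x, gradient (pd u 1) x = 0 := fun x => by
      have h := hdiv x
      simp_rw [fderiv_fderiv_comp_gradient hf hu] at h
      rw [Fin.sum_univ_two, hgw, map_zero, zero_apply, zero_add] at h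
      have hz0 : gradient (pd u 1) x 0 = 0 := by
        rw [gradient_pd hu, fderiv_gradient_apply hu, fderiv_fderiv_symm hu,
          ← fderiv_gradient_apply hu, ← gradient_pd hu, hgw]
        simp
      have hz : gradient (pd u 1) x = gradient (pd u 1) x 1 • ee 1 := by
        conv_lhs => rw [eq_sum_smul_ee (gradient (pd u 1) x), Fin.sum_univ_two, hz0]
        simp
      have hne : ee 1 ≠ 0 := by simp [ee]
      have h11 := hpos (gradient u x) _ hne
      rw [hz, map_smul, smul_apply, smul_eq_mul, ← hHess] at h
      rw [hz, (mul_eq_zero.1 h).resolve_right h11.ne', zero_smul]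
    have hD2 : ∀ x, fderiv ℝ (fderiv ℝ u) x = 0 := fun x => by
      ext p q
      have h1 : fderiv ℝ (gradient u) x p = 0 := by
        rw [eq_sum_smul_ee p]
        simp [← gradient_pd hu, hgw, hgw']
      rw [eq_sum_smul_ee q]
      simp [← fderiv_gradient_apply hu, h1]
    have hconst : ∀ x, fderiv ℝ u x = fderiv ℝ u 0 := fun x =>
      is_const_of_fderiv_eq_zero (hu1.differentiable one_ne_zero) hD2 x 0
    have haff : ∀ x, u x - fderiv ℝ u 0 x = u 0 - fderiv ℝ u 0 0 := fun x => by
      have hd := hu.differentiable two_ne_zero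
      refine is_const_of_fderiv_eq_zero (𝕜 := ℝ) (f := fun x => u x - fderiv ℝ u 0 x)
        (by fun_prop) (fun y => ?_) x 0
      rw [fderiv_fun_sub (hd y) (by fun_prop), hconst y]
      simp
    refine ⟨fderiv ℝ u 0 (ee 0), fderiv ℝ u 0 (ee 1), u 0, fun x => ?_⟩
    have h1 : fderiv ℝ u 0 x = x 0 * fderiv ℝ u 0 (ee 0) + x 1 * fderiv ℝ u 0 (ee 1) := by
      conv_lhs => rw [eq_sum_smul_ee x]
      simp
    have h2 := haff x
    rw [h1, map_zero] at h2
    linarith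
  · intro ψ hψ hψc
    rw [← integral_sum_fderiv_mul_eq_zero
      (v := fun i y => fderiv ℝ f (gradient u y) (ee i)) (fun i => by fun_prop) hdiv hψ hψc (ee 0)]
    congr 1
    funext x
    simp_rw [fderiv_fderiv_comp_gradient hf hu]
    conv_lhs => rw [eq_sum_smul_ee (gradient ψ x)]
    simp [gradient_apply, mul_comm]
  · intro x q
    set s := pd u 0 x with hs
    have hd := hρ' _ (hΓ x)
    have h0 : 0 < 1 + s ^ 2 := by positivity
    have hsg : √(1 + s ^ 2) ≤ 1 + ‖gradient u x‖ := by
      have h1 : |s| ≤ ‖gradient u x‖ := by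
        have := PiLp.norm_apply_le (gradient u x) 0
        rwa [gradient_apply] at this
      rw [Real.sqrt_le_left (by positivity)]
      nlinarith [abs_nonneg s, sq_abs s, norm_nonneg (gradient u x)]
    have hA : fderiv ℝ (fderiv ℝ f) (gradient u x) q q ≤ Lam / √(1 + s ^ 2) * ‖q‖ ^ 2 := by
      rw [← hHess, Hess]
      refine (le_abs_self _).trans (((iteratedFDeriv ℝ 2 f (gradient u x)).le_opNorm _).trans ?_)
      simp only [Fin.prod_univ_two, Matrix.cons_val_zero, Matrix.cons_val_one, ← pow_two]
      gcongr
      refine (hgrow _).trans ?_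
      gcongr
    calc testFun ρ s ^ 2 / deriv (testFun ρ) s * fderiv ℝ (fderiv ℝ f) (gradient u x) q q
        ≤ ρ (1 + s ^ 2) ^ 2 / (√(1 + s ^ 2) * derivWithin ρ (Set.Ici 1) (1 + s ^ 2)) *
          (Lam / √(1 + s ^ 2) * ‖q‖ ^ 2) :=
          mul_le_mul (testFun_sq_div_deriv_le hρC1 hρmono hρ' s) hA (hform _ _) (by positivity)
      _ = Lam * g₀ x * ‖q‖ ^ 2 := by
          have h4 := Real.sq_sqrt h0.le
          simp only [hg₀, ← hs]
          field_simp
          rw [h4]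
          ring
  · intro R hR
    rw [integral_const_mul, mul_assoc]
    exact mul_le_mul_of_nonneg_left
      (setIntegral_ball_le_of_lintegral hg₀c hg₀0 hM hR (hcond R hR)) hLam.le
end
end

section
/- Let g(t) := t·ln(1+t) for t ≥ 0, f(t) := g(√t), and λ(t) := 2f''(t)/f'(t). Then the Nitsche integral diverges: ∫₁^∞ [(1 + t·λ(t))/(2 + t·λ(t))] · (1/t) dt = ∞. -/
open Real MeasureTheory

noncomputable section

/-- `g(t) = t·ln(1+t)`. -/
def gN : ℝ → ℝ := fun t => t * Real.log (1 + t)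

/-- `f(t) = g(√t)`. -/
def fN : ℝ → ℝ := fun t => gN (Real.sqrt t)

/-- `λ(t) = 2 f''(t) / f'(t)`. -/
def lamN : ℝ → ℝ := fun t => 2 * deriv (deriv fN) t / deriv fN t

theorem hasDerivAt_gN {s : ℝ} (hs : 0 < s) :
    HasDerivAt gN (log (1 + s) + s / (1 + s)) s := by
  have h := (hasDerivAt_id' s).mul (((hasDerivAt_id' s).const_add 1).log (by positivity))
  exact h.congr_deriv (by ring)

theorem hasDerivAt_fN {t : ℝ} (ht : 0 < t) :
    HasDerivAt fN ((log (1 + √t) + √t / (1 + √t)) / (2 * √t)) t := by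
  have h := (hasDerivAt_gN (sqrt_pos.2 ht)).comp t (hasDerivAt_sqrt ht.ne')
  exact h.congr_deriv (by ring)

theorem hasDerivAt_deriv_gN {s : ℝ} (hs : 0 < s) :
    HasDerivAt (fun s : ℝ => log (1 + s) + s / (1 + s)) ((2 + s) / (1 + s) ^ 2) s := by
  have h1 : HasDerivAt (fun s : ℝ => 1 + s) 1 s := (hasDerivAt_id' s).const_add 1
  have hne : 1 + s ≠ 0 := by positivity
  refine ((h1.log hne).add ((hasDerivAt_id' s).div h1 hne)).congr_deriv ?_
  field_simp
  ring

theorem hasDerivAt_deriv_fN {t : ℝ} (ht : 0 < t) :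
    HasDerivAt (deriv fN)
      (((2 + √t) / (1 + √t) ^ 2 * √t - (log (1 + √t) + √t / (1 + √t))) / (4 * √t ^ 3)) t := by
  have hs : 0 < √t := sqrt_pos.2 ht
  have hd := hasDerivAt_sqrt ht.ne'
  have h := ((hasDerivAt_deriv_gN hs).comp t hd).div (hd.const_mul 2) (by positivity)
  have heq : deriv fN =ᶠ[nhds t]
      fun u => (log (1 + √u) + √u / (1 + √u)) / (2 * √u) := by
    filter_upwards [lt_mem_nhds ht] with u hu using (hasDerivAt_fN hu).deriv
  refine (h.congr_of_eventuallyEq heq).congr_deriv ?_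
  simp only [Function.comp_apply]
  generalize log (1 + √t) = L
  field_simp
  ring

/-- With `s = √t`, one has `1 + t * λ(t) = s * g''(s) / g'(s)`. -/
theorem one_add_mul_lamN {t : ℝ} (ht : 0 < t) :
    1 + t * lamN t =
      √t * ((2 + √t) / (1 + √t) ^ 2) / (log (1 + √t) + √t / (1 + √t)) := by
  have hs : 0 < √t := sqrt_pos.2 ht
  have hL : 0 < log (1 + √t) := log_pos (by linarith)
  have hg : 0 < log (1 + √t) + √t / (1 + √t) := by positivity
  rw [lamN, (hasDerivAt_deriv_fN ht).deriv, (hasDerivAt_fN ht).deriv]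
  generalize log (1 + √t) + √t / (1 + √t) = G at hg
  generalize (2 + √t) / (1 + √t) ^ 2 = H
  nth_rewrite 1 [← sq_sqrt ht.le]
  field_simp
  ring

/-- Lower bound for the Nitsche integrand. -/
theorem inv_one_add_log_le_nitsche {t : ℝ} (ht : 1 < t) :
    1 / 4 * (1 / t / (1 + log t)) ≤ (1 + t * lamN t) / (2 + t * lamN t) * (1 / t) := by
  have ht0 : 0 < t := by linarith
  have hs : 1 < √t := by rwa [lt_sqrt zero_le_one, one_pow]
  have hlog : 0 < log t := log_pos ht
  have hL : 0 < log (1 + √t) := log_pos (by linarith)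
  have hLle : log (1 + √t) ≤ 1 + log t := by
    have hle : 1 + √t ≤ 2 * t := by nlinarith [sq_sqrt ht0.le]
    have := log_le_log (by positivity) hle
    rw [log_mul two_ne_zero ht0.ne'] at this
    linarith [log_two_lt_d9]
  have hquot : √t / (1 + √t) ≤ 1 := by
    rw [div_le_one (by positivity)]; linarith
  have hg : 0 < log (1 + √t) + √t / (1 + √t) := by positivity
  have hA : 3 / 4 ≤ √t * ((2 + √t) / (1 + √t) ^ 2) := by
    rw [← mul_div_assoc, le_div_iff₀ (by positivity)]; nlinarith
  have hA' : √t * ((2 + √t) / (1 + √t) ^ 2) ≤ 1 := by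
    rw [← mul_div_assoc, div_le_one (by positivity)]; nlinarith
  have h2 : 2 + t * lamN t = 1 + (1 + t * lamN t) := by ring
  rw [h2, one_add_mul_lamN ht0]
  have hgle : log (1 + √t) + √t / (1 + √t) ≤ 2 + log t := by linarith
  generalize log (1 + √t) + √t / (1 + √t) = G at hg hgle
  generalize √t * ((2 + √t) / (1 + √t) ^ 2) = A at hA hA'
  have hA0 : 0 < A := by linarith
  have hfrac : A / G / (1 + A / G) = A / (G + A) := by field_simp
  have hkey : 1 / 4 * (1 / (1 + log t)) ≤ A / (G + A) := by
    rw [← mul_div_assoc, div_le_div_iff₀ (by positivity) (by positivity)]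
    nlinarith
  calc 1 / 4 * (1 / t / (1 + log t)) = 1 / 4 * (1 / (1 + log t)) * (1 / t) := by ring
    _ ≤ A / G / (1 + A / G) * (1 / t) := by rw [hfrac]; gcongr

theorem not_integrableOn_inv_div_one_add_log :
    ¬ IntegrableOn (fun t : ℝ => 1 / t / (1 + log t)) (Set.Ioi 1) := by
  have hderiv : ∀ t : ℝ, 1 < t →
      HasDerivAt (fun t => log (1 + log t)) (1 / t / (1 + log t)) t := fun t ht => by
    have hlog := log_pos ht
    have h := ((hasDerivAt_log (by positivity : t ≠ 0)).const_add 1).log (by positivity)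
    exact h.congr_deriv (by ring)
  refine not_integrableOn_of_tendsto_norm_atTop_of_deriv_isBigO_filter
    (l := Filter.atTop) (f := fun t => log (1 + log t)) (Filter.Ioi_mem_atTop 1) ?_ ?_ ?_
  · filter_upwards [Filter.eventually_gt_atTop 1] with t ht
      using (hderiv t ht).differentiableAt
  · exact tendsto_norm_atTop_atTop.comp <| tendsto_log_atTop.comp <|
      Filter.tendsto_atTop_add_const_left _ _ tendsto_log_atTop
  · refine Filter.EventuallyEq.isBigO ?_
    filter_upwards [Filter.eventually_gt_atTop 1] with t ht using (hderiv t ht).deriv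

theorem statement18 :
    ∫⁻ t in Set.Ioi (1 : ℝ),
      ENNReal.ofReal ((1 + t * lamN t) / (2 + t * lamN t) * (1 / t)) = ⊤ := by
  by_contra hfin
  refine not_integrableOn_inv_div_one_add_log ?_
  have hmeas : Measurable fun t : ℝ => 1 / 4 * (1 / t / (1 + log t)) := by fun_prop
  have hnonneg : 0 ≤ᵐ[volume.restrict (Set.Ioi 1)]
      fun t : ℝ => 1 / 4 * (1 / t / (1 + log t)) := by
    filter_upwards [ae_restrict_mem measurableSet_Ioi] with t ht
    have ht0 : 0 < t := zero_lt_one.trans ht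
    have hlog := log_pos ht
    simp only [Pi.zero_apply]
    positivity
  have hint : IntegrableOn (fun t : ℝ => 1 / 4 * (1 / t / (1 + log t))) (Set.Ioi 1) := by
    refine (lintegral_ofReal_ne_top_iff_integrable hmeas.aestronglyMeasurable hnonneg).1
      (ne_top_of_le_ne_top hfin ?_)
    exact setLIntegral_mono' measurableSet_Ioi fun t ht =>
      ENNReal.ofReal_le_ofReal (inv_one_add_log_le_nitsche ht)
  exact (hint.const_mul 4).congr (.of_forall fun t => by ring)
end
end
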